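/- Let p be a prime, q = 1/p, let μ ≥ 1 be an integer, and set s = ⌊(μ−1)/2⌋. Then, as n → ∞, P(n, p^μ) converges to (Π_∞(q) / ((1−q)·Π_∞(q²))) · ∑_{j=0}^{s} (q^{3j} − q^{μ+j}) / Π_j(q²). -/

import Mathlib

/-- Number of symmetric `n × n` matrices over `ZMod m` with nonzero determinant. -/
noncomputable def Nsym (n m : ℕ) : ℕ :=
  Nat.card {A : Matrix (Fin n) (Fin n) (ZMod m) // A.IsSymm ∧ A.det ≠ 0}

/-- Proportion of symmetric `n × n` matrices over `ZMod m` with nonzero determinant. -/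
noncomputable def Psym (n m : ℕ) : ℝ :=
  (Nsym n m : ℝ) / (m : ℝ) ^ (n * (n + 1) / 2)

/-- `Π_n(t) = ∏_{j=1}^n (1 - t^j)`. -/
noncomputable def PiProd (n : ℕ) (t : ℝ) : ℝ :=
  ∏ j ∈ Finset.range n, (1 - t ^ (j + 1))

/-- `Π_∞(t) = ∏_{j=1}^∞ (1 - t^j)`. -/
noncomputable def PiProdInf (t : ℝ) : ℝ :=
  ∏' j : ℕ, (1 - t ^ (j + 1))

/-!
Let `q = 1 / p` and expand a random symmetric matrix over `ℤ/p^μ` along its first row. If the corner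
is a unit, a Schur complement leaves a uniform symmetric matrix of size one less; if the corner is
divisible by `p` but another entry of the row is not, a `2 × 2` block with unit determinant splits
off; if the whole row is divisible by `p`, one or two factors `p` come out of the determinant. For
the series `S_n(x) = ∑_{μ ≥ 1} P(n, p^μ) x^(μ-1)` this says
`(1 - q^(n+2) x²) S_{n+1} = (1 - q) (1 + q^(n+1) x) S_n + q (1 - q^n) S_{n-1}`,
and the parity of `n` decouples this second-order recurrence into first-order ones, whence
`S_{2m+1} = S_1 ∏_{i < m} (1 - q^(2i+3)) / (1 - q^(2i+3) x²)`.
As `m → ∞`, Euler's expansion of `∏_i (1 - b^i X)⁻¹` with `b = q²` and `X = q³ x²` gives the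
coefficients of the limit.
-/

open Matrix Finset
open scoped BigOperators

section Averaging

variable {V W : Type*} [AddGroup V] [AddGroup W] [Fintype V] [Fintype W]

theorem sum_comp_addMonoidHom {M : Type*} [Semiring M] (φ : V →+ W) (g : W → M)
    (hg : ∀ y ∉ φ.range, g y = 0) :
    ∑ x, g (φ x) = Nat.card φ.ker * ∑ y, g y := by
  classical
  have hfiber (y : W) (hy : y ∈ φ.range) : #{x | φ x = y} = Nat.card φ.ker := by
    rw [AddMonoidHom.card_fiber_eq_of_mem_range φ hy (zero_mem φ.range)]
    exact (Nat.subtype_card _ fun x => by simp [AddMonoidHom.mem_ker]).symm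
  rw [← sum_fiberwise (g := φ), mul_sum]
  refine sum_congr rfl fun y _ => ?_
  rw [sum_congr rfl (g := fun _ => g y) fun x hx => by rw [(mem_filter.1 hx).2], sum_const,
    nsmul_eq_mul]
  by_cases hy : y ∈ φ.range
  · rw [hfiber y hy]
  · simp only [hg y hy, mul_zero]

theorem expect_eq_of_eq_const_off_range (φ : V →+ W) {g : W → ℝ} {c : ℝ}
    (hg : ∀ y ∉ φ.range, g y = c) :
    𝔼 y, g y = (1 - (φ.range.index : ℝ)⁻¹) * c + (φ.range.index : ℝ)⁻¹ * 𝔼 x, g (φ x) := by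
  have hsum := sum_comp_addMonoidHom φ (fun y => g y - c) fun y hy => sub_eq_zero.2 (hg y hy)
  have hV : (Fintype.card V : ℝ) = Nat.card φ.ker * Nat.card φ.range := by
    rw [← AddSubgroup.index_ker, ← Nat.cast_mul, AddSubgroup.card_mul_index,
      Nat.card_eq_fintype_card]
  have hW : (Fintype.card W : ℝ) = Nat.card φ.range * φ.range.index := by
    rw [← Nat.cast_mul, AddSubgroup.card_mul_index, Nat.card_eq_fintype_card]
  have hker : (Nat.card φ.ker : ℝ) ≠ 0 := by exact_mod_cast Nat.card_pos.ne'
  have hrange : (Nat.card φ.range : ℝ) ≠ 0 := by exact_mod_cast Nat.card_pos.ne'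
  have hindex : (φ.range.index : ℝ) ≠ 0 := by exact_mod_cast AddSubgroup.index_ne_zero_of_finite
  simp only [sum_sub_distrib, sum_const, card_univ, nsmul_eq_mul, hV, hW] at hsum
  rw [Fintype.expect_eq_sum_div_card, Fintype.expect_eq_sum_div_card, hV, hW]
  field_simp
  linear_combination -hsum

theorem expect_comp_of_surjective {φ : V →+ W} (hφ : Function.Surjective φ) (g : W → ℝ) :
    𝔼 x, g (φ x) = 𝔼 y, g y := by
  have hrange : φ.range = ⊤ := AddMonoidHom.range_eq_top.2 hφ
  have h := expect_eq_of_eq_const_off_range φ (g := g) (c := 0) fun y hy =>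
    absurd (hrange ▸ AddSubgroup.mem_top y) hy
  rw [h, hrange, AddSubgroup.index_top]
  simp

theorem expect_prod {α β : Type*} [Fintype α] [Fintype β] (f : α × β → ℝ) :
    𝔼 x, f x = 𝔼 a, 𝔼 b, f (a, b) :=
  expect_product univ univ f

end Averaging

section DvdDensity

variable {R : Type*} [CommRing R]

/-- The proportion of multiples of `π` in a finite ring, as the inverse of the index of the ideal
they form. -/
noncomputable def dvdDensity (π : R) : ℝ :=
  ((AddMonoidHom.mulLeft π).range.index : ℝ)⁻¹

theorem mem_range_mulLeft {π x : R} : x ∈ (AddMonoidHom.mulLeft π).range ↔ π ∣ x :=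
  ⟨fun ⟨y, hy⟩ => ⟨y, hy.symm⟩, fun ⟨y, hy⟩ => ⟨y, hy.symm⟩⟩

theorem dvdDensity_const {β : Type*} [Fintype β] (π : R) :
    dvdDensity (fun _ : β => π) = dvdDensity π ^ Fintype.card β := by
  have hrange : (AddMonoidHom.mulLeft fun _ : β => π).range =
      AddSubgroup.pi Set.univ fun _ => (AddMonoidHom.mulLeft π).range := by
    ext x
    simp only [mem_range_mulLeft, pi_dvd_iff, AddSubgroup.mem_pi, Set.mem_univ, true_implies]
  rw [dvdDensity, hrange, AddSubgroup.index_pi, prod_const, card_univ, Nat.cast_pow,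
    dvdDensity, inv_pow]

theorem expect_eq_of_eq_const_of_not_dvd [Fintype R] (π : R) {g : R → ℝ} {c : ℝ}
    (hg : ∀ x, ¬ π ∣ x → g x = c) :
    𝔼 x, g x = (1 - dvdDensity π) * c + dvdDensity π * 𝔼 x, g (π * x) :=
  expect_eq_of_eq_const_off_range (AddMonoidHom.mulLeft π) fun x hx =>
    hg x fun h => hx (mem_range_mulLeft.2 h)

theorem expect_pi_eq_of_eq_const_of_not_dvd {β : Type*} [Fintype β] [DecidableEq β] [Fintype R]
    (π : R) {g : (β → R) → ℝ} {c : ℝ} (hg : ∀ x, (∃ j, ¬ π ∣ x j) → g x = c) :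
    𝔼 x, g x = (1 - dvdDensity π ^ Fintype.card β) * c +
      dvdDensity π ^ Fintype.card β * 𝔼 x, g (π • x) := by
  rw [← dvdDensity_const]
  exact expect_eq_of_eq_const_of_not_dvd (fun _ => π) fun x hx =>
    hg x (not_forall.1 (mt pi_dvd_iff.2 hx))

end DvdDensity

section Blocks

variable {α β R : Type*} [Fintype α] [DecidableEq α] [Fintype β] [DecidableEq β] [CommRing R]

theorem det_fromBlocks_smul_left (π : R) (A : Matrix α α R) (B : Matrix α β R) (C : Matrix β α R)
    (D : Matrix β β R) :
    (fromBlocks (π • A) B (π • C) D).det = π ^ Fintype.card α * (fromBlocks A B C D).det := by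
  have hmul : fromBlocks (π • A) B (π • C) D =
      fromBlocks A B C D * fromBlocks (π • (1 : Matrix α α R)) 0 0 1 := by
    simp [fromBlocks_multiply]
  rw [hmul, det_mul, det_fromBlocks_zero₂₁, det_smul, det_one, det_one, mul_one, mul_one, mul_comm]

theorem det_fromBlocks_smul_top (π : R) (A : Matrix α α R) (B : Matrix α β R) (C : Matrix β α R)
    (D : Matrix β β R) :
    (fromBlocks (π • A) (π • B) C D).det = π ^ Fintype.card α * (fromBlocks A B C D).det := by
  rw [← det_transpose, fromBlocks_transpose, transpose_smul, transpose_smul,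
    det_fromBlocks_smul_left, ← fromBlocks_transpose, det_transpose]

end Blocks

section SymMatrix

/-- The equivalence splitting the index `j` off `Fin (n + 1)`. -/
def finEquivUnitSum {n : ℕ} (j : Fin (n + 1)) : Fin (n + 1) ≃ Unit ⊕ Fin n :=
  (finSuccEquiv' j).trans ((Equiv.optionEquivSumPUnit _).trans (Equiv.sumComm _ _))

theorem finEquivUnitSum_symm_inl {n : ℕ} (j : Fin (n + 1)) :
    (finEquivUnitSum j).symm (.inl ()) = j := by
  simp [finEquivUnitSum]

variable {ι κ β R : Type*}

/-- The additive group of symmetric matrices over `R` indexed by `ι`. -/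
def symMatrix (ι R : Type*) [AddCommGroup R] : AddSubgroup (Matrix ι ι R) where
  carrier := {A | A.IsSymm}
  add_mem' := IsSymm.add
  zero_mem' := isSymm_zero
  neg_mem' := IsSymm.neg

noncomputable instance [AddCommGroup R] [Finite ι] [Finite R] : Fintype (symMatrix ι R) :=
  Fintype.ofFinite _

/-- A symmetric matrix is a function on unordered pairs of indices. -/
def symMatrixEquiv [AddCommGroup R] : symMatrix ι R ≃ (Sym2 ι → R) where
  toFun A := Sym2.lift ⟨fun j k => A.1 j k, fun j k => A.2.apply k j⟩
  invFun x := ⟨of fun j k => x s(j, k), by ext j k; simp [Sym2.eq_swap]⟩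
  left_inv A := by ext j k; rfl
  right_inv x := by ext z; induction z with | _ j k => rfl

theorem card_symMatrix [AddCommGroup R] [Fintype ι] :
    Nat.card (symMatrix ι R) = Nat.card R ^ (Fintype.card ι * (Fintype.card ι + 1) / 2) := by
  classical
  rw [Nat.card_congr symMatrixEquiv, Nat.card_fun, Nat.card_eq_fintype_card (α := Sym2 ι),
    Sym2.card, Nat.choose_two_right, Nat.add_sub_cancel, mul_comm (Fintype.card ι)]

/-- Entrywise application of an additive homomorphism to symmetric matrices. -/
def symMatrixMap (ι : Type*) {S : Type*} [AddCommGroup R] [AddCommGroup S] (φ : R →+ S) :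
    symMatrix ι R →+ symMatrix ι S where
  toFun A := ⟨A.1.map φ, A.2.map φ⟩
  map_zero' := by ext; exact map_zero φ
  map_add' A B := by ext; exact map_add φ _ _

theorem symMatrixMap_surjective {S : Type*} [AddCommGroup R] [AddCommGroup S] {φ : R →+ S}
    (hφ : Function.Surjective φ) : Function.Surjective (symMatrixMap ι φ) := fun B =>
  ⟨⟨B.1.map (Function.surjInv hφ), B.2.map _⟩, by ext; exact Function.surjInv_eq hφ _⟩

/-- Simultaneous reindexing of the rows and columns of symmetric matrices. -/
def symMatrixCongr [AddCommGroup R] (σ : ι ≃ κ) : symMatrix ι R ≃ symMatrix κ R :=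
  (Matrix.reindex σ σ).subtypeEquiv fun _ => (isSymm_reindex_iff σ).symm

/-- The symmetric matrix with first row `(a, b)` and remaining diagonal block `D`. -/
abbrev bordered (a : R) (b : β → R) (D : Matrix β β R) : Matrix (Unit ⊕ β) (Unit ⊕ β) R :=
  fromBlocks (of fun _ _ => a) (replicateRow Unit b) (replicateCol Unit b) D

theorem isSymm_bordered (a : R) (b : β → R) {D : Matrix β β R} (hD : D.IsSymm) :
    (bordered a b D).IsSymm :=
  IsSymm.fromBlocks (by ext; rfl) rfl hD

/-- A symmetric matrix decomposes into its corner, the rest of its first row, and a symmetric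
block. -/
def borderedEquiv [AddCommGroup R] :
    R × (β → R) × symMatrix β R ≃ symMatrix (Unit ⊕ β) R where
  toFun x := ⟨bordered x.1 x.2.1 x.2.2, isSymm_bordered _ _ x.2.2.2⟩
  invFun A := (A.1 (.inl ()) (.inl ()), fun k => A.1 (.inl ()) (.inr k),
    ⟨A.1.toBlocks₂₂, by ext j k; exact A.2.apply _ _⟩)
  left_inv x := by ext <;> rfl
  right_inv A := by
    ext (j | j) (k | k)
    · rfl
    · rfl
    · exact A.2.apply _ _
    · rfl

theorem expect_symMatrix_unit_sum [AddCommGroup R] [Fintype R] [Fintype β] [DecidableEq β]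
    (F : Matrix (Unit ⊕ β) (Unit ⊕ β) R → ℝ) :
    𝔼 A : symMatrix (Unit ⊕ β) R, F A.1 =
      𝔼 a : R, 𝔼 b : β → R, 𝔼 D : symMatrix β R, F (bordered a b D.1) := by
  rw [← Fintype.expect_equiv borderedEquiv _ _ fun _ => rfl, expect_prod]
  exact expect_congr rfl fun a _ => expect_prod _

section Det

variable [CommRing R] [Fintype β] [DecidableEq β]

theorem det_bordered_sq_smul (π a : R) (b : β → R) (D : Matrix β β R) :
    (bordered (π * (π * a)) (π • b) D).det = π * (π * (bordered a b D).det) := by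
  have hleft := det_fromBlocks_smul_left π (of fun _ _ : Unit => a) (replicateRow Unit b)
    (replicateCol Unit b) D
  have htop := det_fromBlocks_smul_top π (π • of fun _ _ : Unit => a) (replicateRow Unit b)
    (π • replicateCol Unit b) D
  rw [Fintype.card_unit, pow_one] at hleft htop
  rw [hleft] at htop
  exact htop

theorem det_bordered_bordered (a c : R) (b : Unit ⊕ β → R) (b' : β → R) (D : Matrix β β R) :
    (bordered a b (bordered c b' D)).det =
      (fromBlocks (bordered a (fun _ => b (.inl ())) (of fun _ _ => c))
        (fromRows (replicateRow Unit (b ∘ .inr)) (replicateRow Unit b'))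
        (fromRows (replicateRow Unit (b ∘ .inr)) (replicateRow Unit b'))ᵀ D).det := by
  rw [← det_submatrix_equiv_self (Equiv.sumAssoc Unit Unit β)]
  congr 1
  ext ((j | j) | j) ((k | k) | k) <;> rfl

theorem det_bordered_unit (a b c : R) :
    (bordered a (fun _ : Unit => b) (of fun _ _ : Unit => c)).det = a * c - b * b := by
  rw [← det_submatrix_equiv_self (finSumFinEquiv (m := 1) (n := 1) |>.symm.trans
    (Equiv.sumCongr (Equiv.ofUnique _ _) (Equiv.ofUnique _ _))), det_fin_two]
  rfl

end Det

end SymMatrix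

section DetMean

variable {ι κ α β R : Type*} [CommRing R] [Fintype R] [Fintype ι] [DecidableEq ι] [Fintype κ]
  [DecidableEq κ] [Fintype α] [DecidableEq α] [Fintype β] [DecidableEq β]

/-- The mean of `f (det A)` over the symmetric matrices `A` indexed by `ι`. -/
noncomputable def detMean (ι : Type*) [Fintype ι] [DecidableEq ι] (f : R → ℝ) : ℝ :=
  𝔼 A : symMatrix ι R, f A.1.det

theorem detMean_congr (σ : ι ≃ κ) (f : R → ℝ) : detMean ι f = detMean κ f :=
  Fintype.expect_equiv (symMatrixCongr σ) _ _ fun A => congrArg f (det_reindex_self σ A.1).symm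

theorem detMean_comp {S : Type*} [CommRing S] [Fintype S] {φ : R →+* S}
    (hφ : Function.Surjective φ) (f : S → ℝ) : detMean ι (fun x => f (φ x)) = detMean ι f := by
  rw [detMean, detMean, ← expect_comp_of_surjective (symMatrixMap_surjective (ι := ι)
    (φ := φ.toAddMonoidHom) hφ)]
  exact expect_congr rfl fun A _ => congrArg f (RingHom.map_det φ A.1)

-- Translating `D` by a symmetric matrix turns the Schur complement of `E` into `D`.
theorem expect_det_fromBlocks (f : R → ℝ) {E : Matrix α α R} (hE : E.IsSymm)
    (hdet : IsUnit E.det) (c : R) (B : Matrix α β R) :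
    𝔼 D : symMatrix β R, f (fromBlocks E B (c • Bᵀ) D.1).det =
      detMean β fun x => f (E.det * x) := by
  have hS : (c • Bᵀ * E⁻¹ * B).IsSymm := by
    rw [Matrix.smul_mul, Matrix.smul_mul]
    refine IsSymm.smul ?_ c
    rw [IsSymm, transpose_mul, transpose_mul, transpose_transpose, transpose_nonsing_inv, hE,
      Matrix.mul_assoc]
  have := invertibleOfIsUnitDet E hdet
  refine Fintype.expect_equiv (Equiv.subRight (⟨_, hS⟩ : symMatrix β R)) _ _ fun D => ?_
  rw [det_fromBlocks₁₁, invOf_eq_nonsing_inv]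
  rfl

theorem expect_det_bordered_of_isUnit (f : R → ℝ) {a : R} (ha : IsUnit a) (b : β → R) :
    𝔼 D : symMatrix β R, f (bordered a b D.1).det = detMean β fun x => f (a * x) := by
  have h := expect_det_fromBlocks f (E := of fun _ _ : Unit => a) (by ext; rfl)
    (by rwa [det_unique]) 1 (replicateRow Unit b)
  rwa [one_smul, det_unique] at h

theorem expect_det_bordered_smul_of_isUnit (f : R → ℝ) (π : R) {a : R} (ha : IsUnit a)
    (b : β → R) :
    𝔼 D : symMatrix β R, f (bordered (π * a) (π • b) D.1).det =
      detMean β fun x => f (π * (a * x)) := by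
  have h := expect_det_fromBlocks (fun x => f (π * x)) (E := of fun _ _ : Unit => a) (by ext; rfl)
    (by rwa [det_unique]) π (replicateRow Unit b)
  rw [det_unique] at h
  refine (expect_congr rfl fun D _ => congrArg f ?_).trans h
  have := det_fromBlocks_smul_top π (of fun _ _ : Unit => a) (replicateRow Unit b)
    (π • (replicateRow Unit b)ᵀ) D.1
  rwa [Fintype.card_unit, pow_one] at this

variable {π : R} (hπ : ∀ x, IsUnit x ↔ ¬ π ∣ x) {f : R → ℝ}
  (hf : ∀ u, IsUnit u → ∀ x, f (u * x) = f x)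

include hπ hf

theorem expect_det_bordered_of_not_dvd_inl {a : R} (ha : π ∣ a) {b : Unit ⊕ β → R}
    (hb : ¬ π ∣ b (.inl ())) :
    𝔼 D : symMatrix (Unit ⊕ β) R, f (bordered a b D.1).det = detMean β f := by
  have hdet (c : R) : IsUnit (bordered a (fun _ => b (.inl ())) (of fun _ _ : Unit => c)).det := by
    rw [det_bordered_unit, hπ, dvd_sub_right (ha.mul_right c), ← hπ]
    exact ((hπ _).2 hb).mul ((hπ _).2 hb)
  have hinner (c : R) (b' : β → R) :
      𝔼 D : symMatrix β R, f (bordered a b (bordered c b' D.1)).det = detMean β f := by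
    have hE : (bordered a (fun _ => b (.inl ())) (of fun _ _ : Unit => c)).IsSymm :=
      isSymm_bordered _ _ (by ext; rfl)
    have h := expect_det_fromBlocks f hE (hdet c) 1
      (fromRows (replicateRow Unit (b ∘ .inr)) (replicateRow Unit b'))
    simp only [one_smul, hf _ (hdet c), ← det_bordered_bordered] at h
    exact h
  rw [expect_symMatrix_unit_sum fun D => f (bordered a b D).det]
  simp only [hinner, Fintype.expect_const]

theorem expect_det_bordered_of_not_dvd (σ : β ≃ Unit ⊕ α) {a : R} (ha : π ∣ a) {b : β → R}
    (hb : ¬ π ∣ b (σ.symm (.inl ()))) :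
    𝔼 D : symMatrix β R, f (bordered a b D.1).det = detMean α f := by
  rw [← expect_det_bordered_of_not_dvd_inl hπ hf ha (b := b ∘ σ.symm) hb]
  refine Fintype.expect_equiv (symMatrixCongr σ) _ _ fun D => congrArg f ?_
  rw [← det_submatrix_equiv_self (Equiv.sumCongr (Equiv.refl Unit) σ.symm)]
  congr 1
  ext (j | j) (k | k) <;> rfl

theorem detMean_fin_succ (n : ℕ) :
    detMean (Fin (n + 1)) f = (1 - dvdDensity π) * detMean (Fin n) f +
      dvdDensity π * ((1 - dvdDensity π ^ n) * detMean (Fin (n - 1)) f +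
        dvdDensity π ^ n * ((1 - dvdDensity π) * detMean (Fin n) (fun x => f (π * x)) +
          dvdDensity π * detMean (Fin (n + 1)) fun x => f (π * (π * x)))) := by
  let Φ (a : R) (b : Fin n → R) : ℝ := 𝔼 D : symMatrix (Fin n) R, f (bordered a b D.1).det
  have hΦ (g : R → ℝ) : detMean (Fin (n + 1)) g =
      𝔼 a : R, 𝔼 b : Fin n → R, 𝔼 D : symMatrix (Fin n) R, g (bordered a b D.1).det := by
    rw [detMean_congr (finEquivUnitSum 0) g]
    exact expect_symMatrix_unit_sum fun A => g A.det
  have hcorner (a : R) (ha : ¬ π ∣ a) : 𝔼 b, Φ a b = detMean (Fin n) f := by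
    have hau := (hπ a).2 ha
    simp only [Φ, expect_det_bordered_of_isUnit f hau, hf a hau, Fintype.expect_const]
  have hrow (a : R) (b : Fin n → R) (hb : ∃ j, ¬ π ∣ b j) :
      Φ (π * a) b = detMean (Fin (n - 1)) f := by
    obtain ⟨j, hj⟩ := hb
    obtain ⟨m, rfl⟩ := Nat.exists_eq_add_one.2 j.pos
    exact expect_det_bordered_of_not_dvd hπ hf (finEquivUnitSum j) (dvd_mul_right π a)
      (by rwa [finEquivUnitSum_symm_inl])
  have hcorner' (a : R) (ha : ¬ π ∣ a) :
      𝔼 b, Φ (π * a) (π • b) = detMean (Fin n) fun x => f (π * x) := by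
    have hau := (hπ a).2 ha
    simp only [Φ, expect_det_bordered_smul_of_isUnit f π hau, mul_left_comm π a, hf a hau,
      Fintype.expect_const]
  have hsq : 𝔼 a, 𝔼 b, Φ (π * (π * a)) (π • b) =
      detMean (Fin (n + 1)) fun x => f (π * (π * x)) := by
    simp only [Φ, det_bordered_sq_smul, hΦ]
  rw [hΦ f, expect_eq_of_eq_const_of_not_dvd π hcorner]
  simp only [expect_pi_eq_of_eq_const_of_not_dvd π (hrow _), expect_add_distrib, ← mul_expect,
    Fintype.expect_const, Fintype.card_fin]
  rw [expect_eq_of_eq_const_of_not_dvd π hcorner', hsq]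

end DetMean

section ZModPrimePow

variable {p : ℕ} [Fact p.Prime]

theorem mul_zmod_eq_zero_iff {a b m : ℕ} [NeZero a] [NeZero m] (h : a * b = m) (x : ZMod m) :
    (a : ZMod m) * x = 0 ↔ ZMod.castHom (Dvd.intro_left a h) (ZMod b) x = 0 := by
  rw [← ZMod.natCast_zmod_val x, map_natCast, ← Nat.cast_mul, ZMod.natCast_eq_zero_iff,
    ZMod.natCast_eq_zero_iff]
  generalize x.val = v
  rw [← h, Nat.mul_dvd_mul_iff_left (Nat.pos_of_neZero a)]

theorem natCast_dvd_zmod_iff {d m : ℕ} [NeZero m] (h : d ∣ m) (x : ZMod m) :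
    (d : ZMod m) ∣ x ↔ ZMod.castHom h (ZMod d) x = 0 := by
  refine ⟨?_, fun hx => ?_⟩
  · rintro ⟨y, rfl⟩
    rw [map_mul, map_natCast, ZMod.natCast_self, zero_mul]
  · rw [← ZMod.natCast_zmod_val x, map_natCast, ZMod.natCast_eq_zero_iff] at hx
    rw [← ZMod.natCast_zmod_val x]
    exact Nat.cast_dvd_cast hx

theorem dvdDensity_natCast {d m : ℕ} [NeZero m] (h : d ∣ m) :
    dvdDensity (d : ZMod m) = 1 / d := by
  have hrange : (AddMonoidHom.mulLeft (d : ZMod m)).range =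
      (ZMod.castHom h (ZMod d)).toAddMonoidHom.ker := by
    ext x
    exact mem_range_mulLeft.trans (natCast_dvd_zmod_iff h x)
  rw [dvdDensity, hrange, AddSubgroup.index_ker, AddMonoidHom.range_eq_top.2
    (ZMod.castHom_surjective h), AddSubgroup.card_top, Nat.card_zmod, one_div]

theorem isUnit_zmod_primePow_iff (k : ℕ) (x : ZMod (p ^ (k + 1))) :
    IsUnit x ↔ ¬ (p : ZMod (p ^ (k + 1))) ∣ x := by
  rw [natCast_dvd_zmod_iff (dvd_pow_self p k.succ_ne_zero), ← ZMod.natCast_zmod_val x, map_natCast,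
    ZMod.natCast_eq_zero_iff, ZMod.isUnit_iff_coprime, Nat.coprime_pow_right_iff k.succ_pos,
    Nat.coprime_comm, (Fact.out : p.Prime).coprime_iff_not_dvd]

open Classical in
theorem Psym_eq_detMean (n m : ℕ) [NeZero m] :
    Psym n m = detMean (Fin n) fun x : ZMod m => if x ≠ 0 then 1 else 0 := by
  have hcard : Nat.card {A : symMatrix (Fin n) (ZMod m) // A.1.det ≠ 0} = Nsym n m :=
    Nat.card_congr (Equiv.subtypeSubtypeEquivSubtypeInter _ fun A : Matrix _ _ _ => A.det ≠ 0)
  have hall : Fintype.card (symMatrix (Fin n) (ZMod m)) = m ^ (n * (n + 1) / 2) := by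
    rw [← Nat.card_eq_fintype_card, card_symMatrix, Nat.card_zmod, Fintype.card_fin]
  rw [detMean, Fintype.expect_eq_sum_div_card, sum_boole, ← Fintype.card_subtype,
    ← Nat.card_eq_fintype_card, hcard, hall, Psym, Nat.cast_pow]

open Classical in
theorem detMean_natCast_mul_ne_zero {a b m : ℕ} [NeZero a] [NeZero b] [NeZero m] (h : a * b = m)
    (n : ℕ) : detMean (Fin n) (fun x : ZMod m => if (a : ZMod m) * x ≠ 0 then (1 : ℝ) else 0) =
      Psym n b := by
  simp only [Ne, mul_zmod_eq_zero_iff h]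
  rw [Psym_eq_detMean, ← detMean_comp (ZMod.castHom_surjective (Dvd.intro_left a h))]

theorem Psym_one (n : ℕ) : Psym n 1 = 0 := by
  rw [Psym, Nsym, Nat.card_eq_zero.2 (.inl ⟨fun A => A.2.2 (Subsingleton.elim _ _)⟩),
    Nat.cast_zero, zero_div]

theorem Psym_zero_left {m : ℕ} (hm : 1 < m) : Psym 0 m = 1 := by
  have := Fact.mk hm
  have : NeZero m := ⟨by lia⟩
  rw [Psym_eq_detMean, detMean]
  simp only [det_isEmpty, ne_eq, one_ne_zero, not_false_eq_true, if_true, Fintype.expect_const]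

theorem Psym_succ_primePow (n k : ℕ) {q : ℝ} (hq : q = 1 / p) :
    Psym (n + 1) (p ^ (k + 1)) = (1 - q) * Psym n (p ^ (k + 1)) +
      q * ((1 - q ^ n) * Psym (n - 1) (p ^ (k + 1)) +
        q ^ n * ((1 - q) * Psym n (p ^ k) + q * Psym (n + 1) (p ^ (k - 1)))) := by
  classical
  let f (x : ZMod (p ^ (k + 1))) : ℝ := if x ≠ 0 then 1 else 0
  have hf (u : ZMod (p ^ (k + 1))) (hu : IsUnit u) (x : ZMod (p ^ (k + 1))) : f (u * x) = f x := by
    simp only [f, Ne, hu.mul_right_eq_zero]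
  have hrec := detMean_fin_succ (isUnit_zmod_primePow_iff k) hf n
  have hsq : detMean (Fin (n + 1)) (fun x => f (p * (p * x))) = Psym (n + 1) (p ^ (k - 1)) := by
    rcases k with _ | k
    · have hp : (p : ZMod (p ^ (0 + 1))) = 0 := (ZMod.natCast_eq_zero_iff _ _).2 (by simp)
      simp only [f, hp, zero_mul, ne_eq, not_true_eq_false, if_false, Nat.zero_sub, pow_zero,
        Psym_one]
      exact Fintype.expect_const 0
    · simp only [f, ← mul_assoc, ← Nat.cast_mul]
      exact detMean_natCast_mul_ne_zero (by rw [Nat.add_sub_cancel]; ring) _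
  rw [hsq, detMean_natCast_mul_ne_zero (a := p) (b := p ^ k) (by ring)] at hrec
  simp only [f, ← Psym_eq_detMean, dvdDensity_natCast (dvd_pow_self p k.succ_ne_zero), ← hq] at hrec
  exact hrec

end ZModPrimePow

section Recurrence

variable {A : Type*} [CommRing A] {Q x : A} {S : ℕ → A}
  (hS : ∀ n, (1 - Q ^ (n + 2) * x ^ 2) * S (n + 1) =
    (1 - Q) * (1 + Q ^ (n + 1) * x) * S n + Q * (1 - Q ^ n) * S (n - 1))

include hS

theorem recurrence_even_of_odd (m : ℕ)
    (hodd : (1 - Q ^ (2 * m + 1) * x) * S (2 * m + 1) = (1 - Q ^ (2 * m + 1)) * S (2 * m)) :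
    (1 - Q ^ (2 * m + 3) * x ^ 2) * S (2 * m + 2) = (1 - Q ^ (2 * m + 3) * x) * S (2 * m + 1) := by
  have h := hS (2 * m + 1)
  rw [Nat.add_sub_cancel] at h
  linear_combination h - Q * hodd

variable [IsDomain A]

theorem recurrence_odd_of_even {n : ℕ} (hx : 1 - Q ^ (n + 2) * x ^ 2 ≠ 0)
    (heven : (1 - Q ^ n) * ((1 - Q ^ (n + 1) * x ^ 2) * S n) =
      (1 - Q ^ n) * ((1 - Q ^ (n + 1) * x) * S (n - 1))) :
    (1 - Q ^ (n + 1) * x) * S (n + 1) = (1 - Q ^ (n + 1)) * S n := by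
  refine mul_left_cancel₀ hx ?_
  linear_combination (1 - Q ^ (n + 1) * x) * hS n - Q * heven

variable (hx : ∀ k, 1 - Q ^ k * x ≠ 0) (hx' : ∀ k, 1 - Q ^ k * x ^ 2 ≠ 0)

include hx'

theorem recurrence_odd (m : ℕ) :
    (1 - Q ^ (2 * m + 1) * x) * S (2 * m + 1) = (1 - Q ^ (2 * m + 1)) * S (2 * m) := by
  induction m with
  | zero => exact recurrence_odd_of_even hS (hx' _) (by simp)
  | succ m ih =>
    exact recurrence_odd_of_even hS (hx' _) (congrArg _ (recurrence_even_of_odd hS m ih))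

include hx

theorem recurrence_odd_succ (m : ℕ) :
    (1 - Q ^ (2 * m + 3) * x ^ 2) * S (2 * m + 3) = (1 - Q ^ (2 * m + 3)) * S (2 * m + 1) := by
  refine mul_left_cancel₀ (hx (2 * m + 3)) ?_
  linear_combination (1 - Q ^ (2 * m + 3) * x ^ 2) * recurrence_odd hS hx' (m + 1) +
    (1 - Q ^ (2 * m + 3)) * recurrence_even_of_odd hS m (recurrence_odd hS hx' m)

theorem recurrence_odd_mul_prod (m : ℕ) :
    S (2 * m + 1) * ∏ i ∈ range m, (1 - Q ^ (2 * i + 3) * x ^ 2) =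
      (∏ i ∈ range m, (1 - Q ^ (2 * i + 3))) * S 1 := by
  induction m with
  | zero => simp only [mul_zero, zero_add, prod_range_zero, mul_one, one_mul]
  | succ m ih =>
    rw [prod_range_succ, prod_range_succ, mul_add_one]
    linear_combination (∏ i ∈ range m, (1 - Q ^ (2 * i + 3) * x ^ 2)) *
      recurrence_odd_succ hS hx hx' m + (1 - Q ^ (2 * m + 3)) * ih

end Recurrence

section QProducts

open Filter Topology

variable {t : ℝ}

theorem PiProd_succ (n : ℕ) (t : ℝ) : PiProd (n + 1) t = PiProd n t * (1 - t ^ (n + 1)) :=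
  prod_range_succ _ _

theorem abs_sq_lt_one (ht : |t| < 1) : |t ^ 2| < 1 := by
  rw [abs_pow]
  exact pow_lt_one₀ (abs_nonneg t) ht two_ne_zero

theorem one_sub_pow_succ_ne_zero (ht : |t| < 1) (n : ℕ) : 1 - t ^ (n + 1) ≠ 0 := by
  have h : |t ^ (n + 1)| < 1 := by
    rw [abs_pow]
    exact pow_lt_one₀ (abs_nonneg t) ht n.succ_ne_zero
  exact (sub_pos.2 (abs_lt.1 h).2).ne'

theorem PiProd_ne_zero (ht : |t| < 1) (n : ℕ) : PiProd n t ≠ 0 :=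
  prod_ne_zero_iff.2 fun j _ => one_sub_pow_succ_ne_zero ht j

theorem summable_norm_neg_pow_succ (ht : |t| < 1) : Summable fun j : ℕ => ‖-t ^ (j + 1)‖ := by
  simp only [norm_neg, norm_pow]
  exact (summable_nat_add_iff 1).2 (summable_geometric_of_lt_one (norm_nonneg t) ht)

theorem tendsto_PiProd (ht : |t| < 1) :
    Tendsto (fun n => PiProd n t) atTop (𝓝 (PiProdInf t)) := by
  have h := (multipliable_one_add_of_summable
    (summable_norm_neg_pow_succ ht)).hasProd.tendsto_prod_nat
  simpa only [← sub_eq_add_neg, PiProd, PiProdInf] using h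

theorem PiProdInf_ne_zero (ht : |t| < 1) : PiProdInf t ≠ 0 := by
  have h := tprod_one_add_ne_zero_of_summable (f := fun j : ℕ => -t ^ (j + 1))
    (fun j => by simpa only [← sub_eq_add_neg] using one_sub_pow_succ_ne_zero ht j)
    (summable_norm_neg_pow_succ ht)
  simpa only [← sub_eq_add_neg, PiProdInf] using h

theorem PiProd_two_mul_add_one (m : ℕ) (t : ℝ) :
    PiProd (2 * m + 1) t =
      (∏ i ∈ range m, (1 - t ^ (2 * i + 3))) * ((1 - t) * PiProd m (t ^ 2)) := by
  induction m with
  | zero => simp [PiProd]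
  | succ m ih =>
    rw [mul_add_one, PiProd_succ, PiProd_succ, ih, PiProd_succ, prod_range_succ]
    ring

theorem tendsto_prod_one_sub_pow_odd (ht : |t| < 1) :
    Tendsto (fun m => ∏ i ∈ range m, (1 - t ^ (2 * i + 3))) atTop
      (𝓝 (PiProdInf t / ((1 - t) * PiProdInf (t ^ 2)))) := by
  have ht1 : 1 - t ≠ 0 := by simpa only [zero_add, pow_one] using one_sub_pow_succ_ne_zero ht 0
  have ht2 : |t ^ 2| < 1 := abs_sq_lt_one ht
  have hodd : Tendsto (fun m : ℕ => 2 * m + 1) atTop atTop :=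
    tendsto_atTop_mono (fun m => show m ≤ 2 * m + 1 by lia) tendsto_id
  refine (((tendsto_PiProd ht).comp hodd).div ((tendsto_PiProd ht2).const_mul (1 - t))
    (mul_ne_zero ht1 (PiProdInf_ne_zero ht2))).congr fun m => ?_
  rw [Pi.div_apply, Function.comp_apply, PiProd_two_mul_add_one,
    mul_div_cancel_right₀ _ (mul_ne_zero ht1 (PiProd_ne_zero ht2 m))]

end QProducts

section PsymSeries

open PowerSeries

variable {p : ℕ} [Fact p.Prime] {q : ℝ}

theorem Psym_one_primePow (hq : q = 1 / p) (k : ℕ) : Psym 1 (p ^ k) = 1 - q ^ k := by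
  have hrec (k : ℕ) := Psym_succ_primePow (p := p) 0 k hq
  have hzero (k : ℕ) : Psym 0 (p ^ (k + 1)) = 1 :=
    Psym_zero_left (Nat.one_lt_pow k.succ_ne_zero (Fact.out : p.Prime).one_lt)
  induction k using Nat.twoStepInduction with
  | zero => rw [pow_zero, pow_zero, Psym_one, sub_self]
  | one =>
    rw [hrec 0, hzero, pow_zero, pow_zero, Psym_one, Psym_one]
    ring
  | more k ih _ =>
    rw [hrec (k + 1), hzero, hzero, Nat.add_sub_cancel, ih]
    ring

/-- The generating series of `Psym n (p ^ μ)` in `μ ≥ 1`, shifted so that the exponent `μ` sits in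
degree `μ - 1`. -/
noncomputable def psymSeries (p n : ℕ) : ℝ⟦X⟧ :=
  PowerSeries.mk fun d => Psym n (p ^ (d + 1))

theorem coeff_X_mul_psymSeries (p n d : ℕ) : coeff d (X * psymSeries p n) = Psym n (p ^ d) := by
  cases d with
  | zero => rw [coeff_zero_X_mul, pow_zero, Psym_one]
  | succ d => rw [coeff_succ_X_mul, psymSeries, coeff_mk]

theorem coeff_X_sq_mul_psymSeries (p n d : ℕ) :
    coeff d (X ^ 2 * psymSeries p n) = Psym n (p ^ (d - 1)) := by
  rw [pow_two, mul_assoc]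
  cases d with
  | zero => rw [coeff_zero_X_mul, Nat.zero_sub, pow_zero, Psym_one]
  | succ d => rw [coeff_succ_X_mul, coeff_X_mul_psymSeries, Nat.add_sub_cancel]

theorem psymSeries_recurrence (hq : q = 1 / p) (n : ℕ) :
    (1 - C q ^ (n + 2) * X ^ 2) * psymSeries p (n + 1) =
      (1 - C q) * (1 + C q ^ (n + 1) * X) * psymSeries p n +
        C q * (1 - C q ^ n) * psymSeries p (n - 1) := by
  suffices h : psymSeries p (n + 1) = C (1 - q) * psymSeries p n +
      C q * (C (1 - q ^ n) * psymSeries p (n - 1) +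
        C (q ^ n) * (C (1 - q) * (X * psymSeries p n) + C q * (X ^ 2 * psymSeries p (n + 1)))) by
    simp only [map_sub, map_one, map_pow] at h
    linear_combination h
  ext d
  simp only [map_add, coeff_C_mul, coeff_X_mul_psymSeries, coeff_X_sq_mul_psymSeries]
  simp only [psymSeries, coeff_mk]
  exact Psym_succ_primePow n d hq

end PsymSeries

section SubstMulXSq

open PowerSeries

variable {A : Type*} [CommRing A]

theorem one_sub_mul_ne_zero [Nontrivial A] (F : A⟦X⟧) {G : A⟦X⟧} (hG : constantCoeff G = 0) :
    1 - F * G ≠ 0 :=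
  ne_zero_of_map (f := constantCoeff) (by simp [hG])

/-- The substitution `X ↦ c X²` on power series. -/
noncomputable def substMulXSq (c : A) : A⟦X⟧ →+* A⟦X⟧ :=
  (expand 2 two_ne_zero).toRingHom.comp (rescale c)

theorem substMulXSq_C (c a : A) : substMulXSq c (C a) = C a := by
  have hC : rescale c (C a) = C a := by
    ext d
    cases d <;> simp [coeff_rescale, coeff_C]
  simp [substMulXSq, hC, expand_C]

theorem substMulXSq_X (c : A) : substMulXSq c X = C c * X ^ 2 := by
  simp [substMulXSq, rescale_X, expand_C, expand_X]

theorem coeff_two_mul_substMulXSq (c : A) (F : A⟦X⟧) (j : ℕ) :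
    coeff (2 * j) (substMulXSq c F) = c ^ j * coeff j F :=
  (coeff_expand_mul 2 two_ne_zero (rescale c F) j).trans (coeff_rescale F c j)

theorem coeff_substMulXSq_of_not_dvd (c : A) (F : A⟦X⟧) {d : ℕ} (hd : ¬ 2 ∣ d) :
    coeff d (substMulXSq c F) = 0 :=
  coeff_expand_of_not_dvd 2 two_ne_zero (rescale c F) hd

theorem coeff_substMulXSq_mul (c : A) (F G : A⟦X⟧) (d : ℕ) :
    coeff d (substMulXSq c F * G) =
      ∑ j ∈ range (d / 2 + 1), c ^ j * coeff j F * coeff (d - 2 * j) G := by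
  rw [coeff_mul, Nat.sum_antidiagonal_eq_sum_range_succ
    fun i j => coeff i (substMulXSq c F) * coeff j G]
  symm
  refine sum_of_injOn (2 * ·) (fun _ _ _ _ h => by simpa using h) (fun j hj => ?_)
    (fun i hi hij => ?_) fun j _ => ?_
  · simp only [coe_range, Set.mem_Iio] at hj ⊢
    lia
  · have hodd : ¬ 2 ∣ i := by
      rintro ⟨j, rfl⟩
      simp only [mem_range] at hi
      exact hij ⟨j, by simp only [coe_range, Set.mem_Iio]; lia, rfl⟩
    rw [coeff_substMulXSq_of_not_dvd c F hodd, zero_mul]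
  · rw [coeff_two_mul_substMulXSq]

end SubstMulXSq

section EulerSeries

open PowerSeries

variable {b : ℝ}

/-- Euler's series `∑ⱼ Xʲ / Π_j(b)`, the expansion of `∏ᵢ (1 - bⁱ X)⁻¹`. -/
noncomputable def eulerSeries (b : ℝ) : ℝ⟦X⟧ :=
  PowerSeries.mk fun j => 1 / PiProd j b

theorem constantCoeff_eulerSeries (b : ℝ) : constantCoeff (eulerSeries b) = 1 := by
  simp [eulerSeries, ← coeff_zero_eq_constantCoeff_apply, PiProd]

theorem eulerSeries_mul_one_sub_X (hb : |b| < 1) :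
    eulerSeries b * (1 - X) = rescale b (eulerSeries b) := by
  ext d
  cases d with
  | zero => simp
  | succ d =>
    have hd := PiProd_ne_zero hb d
    have hd' := one_sub_pow_succ_ne_zero hb d
    simp only [mul_sub, mul_one, map_sub, coeff_succ_mul_X, coeff_rescale, eulerSeries, coeff_mk,
      PiProd_succ]
    field_simp
    ring

theorem eulerSeries_mul_prod (hb : |b| < 1) (m : ℕ) :
    eulerSeries b * ∏ i ∈ range m, (1 - C (b ^ i) * X) = rescale (b ^ m) (eulerSeries b) := by
  induction m with
  | zero => simp
  | succ m ih =>
    have h := congrArg (rescale (b ^ m)) (eulerSeries_mul_one_sub_X hb)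
    rw [map_mul, map_sub, map_one, rescale_X, rescale_rescale, ← pow_succ'] at h
    rw [prod_range_succ, ← mul_assoc, ih, h]

end EulerSeries

section Limit

open PowerSeries Filter Topology
open scoped PowerSeries.WithPiTopology

variable {p : ℕ} [Fact p.Prime] {q : ℝ}

theorem psymSeries_odd (hq : q = 1 / p) (hq1 : |q| < 1) (m : ℕ) :
    psymSeries p (2 * m + 1) =
      C (∏ i ∈ range m, (1 - q ^ (2 * i + 3))) *
        substMulXSq (q ^ 3) (rescale ((q ^ 2) ^ m) (eulerSeries (q ^ 2))⁻¹) *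
          (substMulXSq (q ^ 3) (eulerSeries (q ^ 2)) * psymSeries p 1) := by
  set E := eulerSeries (q ^ 2)
  set ψ := substMulXSq (q ^ 3)
  have hprod := recurrence_odd_mul_prod (psymSeries_recurrence hq)
    (fun _ => one_sub_mul_ne_zero _ constantCoeff_X)
    (fun _ => one_sub_mul_ne_zero _ (by simp)) m
  have heuler : ψ E * ∏ i ∈ range m, (1 - C q ^ (2 * i + 3) * X ^ 2) =
      ψ (rescale ((q ^ 2) ^ m) E) := by
    rw [← eulerSeries_mul_prod (abs_sq_lt_one hq1), map_mul, map_prod]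
    refine congrArg _ (prod_congr rfl fun i _ => ?_)
    rw [map_sub, map_mul, map_one, substMulXSq_C, substMulXSq_X]
    simp only [map_pow]
    ring
  have hinv : ψ (rescale ((q ^ 2) ^ m) E) * ψ (rescale ((q ^ 2) ^ m) E⁻¹) = 1 := by
    rw [← map_mul, ← map_mul, PowerSeries.mul_inv_cancel, map_one, map_one]
    rw [constantCoeff_eulerSeries]
    exact one_ne_zero
  simp only [map_prod, map_sub, map_one, map_pow]
  linear_combination ψ E * ψ (rescale ((q ^ 2) ^ m) E⁻¹) * hprod -
    psymSeries p (2 * m + 1) * hinv -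
    psymSeries p (2 * m + 1) * ψ (rescale ((q ^ 2) ^ m) E⁻¹) * heuler

theorem tendsto_substMulXSq_rescale_pow {b : ℝ} (hb : |b| < 1) (c : ℝ) (F : ℝ⟦X⟧) :
    Tendsto (fun m : ℕ => substMulXSq c (rescale (b ^ m) F)) atTop (𝓝 (C (constantCoeff F))) := by
  rw [← substMulXSq_C c, ← rescale_zero_apply, WithPiTopology.tendsto_iff_coeff_tendsto]
  intro d
  by_cases hd : 2 ∣ d
  · obtain ⟨j, rfl⟩ := hd
    simp only [coeff_two_mul_substMulXSq, coeff_rescale]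
    exact (((tendsto_pow_atTop_nhds_zero_of_abs_lt_one hb).pow j).mul_const _).const_mul _
  · simp only [coeff_substMulXSq_of_not_dvd _ _ hd]
    exact tendsto_const_nhds

theorem tendsto_psymSeries_odd (hq : q = 1 / p) (hq1 : |q| < 1) :
    Tendsto (fun m : ℕ => psymSeries p (2 * m + 1)) atTop
      (𝓝 (C (PiProdInf q / ((1 - q) * PiProdInf (q ^ 2))) *
        (substMulXSq (q ^ 3) (eulerSeries (q ^ 2)) * psymSeries p 1))) := by
  have hinv := tendsto_substMulXSq_rescale_pow (abs_sq_lt_one hq1) (q ^ 3) (eulerSeries (q ^ 2))⁻¹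
  have hconst := (WithPiTopology.continuous_C.tendsto _).comp (tendsto_prod_one_sub_pow_odd hq1)
  rw [constantCoeff_inv, constantCoeff_eulerSeries, inv_one, map_one] at hinv
  have h := (hconst.mul hinv).mul_const
    (substMulXSq (q ^ 3) (eulerSeries (q ^ 2)) * psymSeries p 1)
  rw [mul_one] at h
  exact h.congr fun m => (psymSeries_odd hq hq1 m).symm

theorem tendsto_psymSeries_even (hq : q = 1 / p) (hq1 : |q| < 1) {L : ℝ⟦X⟧}
    (hL : Tendsto (fun m : ℕ => psymSeries p (2 * m + 1)) atTop (𝓝 L)) :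
    Tendsto (fun m : ℕ => psymSeries p (2 * m)) atTop (𝓝 L) := by
  have hpow : Tendsto (fun m : ℕ => q ^ (2 * m + 1)) atTop (𝓝 0) :=
    (tendsto_pow_atTop_nhds_zero_of_abs_lt_one hq1).comp
      (tendsto_atTop_mono (fun m => show m ≤ 2 * m + 1 by lia) tendsto_id)
  have hfactor : Tendsto (fun m : ℕ => C (1 - q ^ (2 * m + 1))⁻¹ * (1 - C (q ^ (2 * m + 1)) * X))
      atTop (𝓝 (C (1 - 0)⁻¹ * (1 - C 0 * X) : ℝ⟦X⟧)) :=
    ((WithPiTopology.continuous_C.tendsto _).comp ((hpow.const_sub 1).inv₀ (by simp))).mul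
      ((((WithPiTopology.continuous_C.tendsto _).comp hpow).mul_const X).const_sub 1)
  have h := hfactor.mul hL
  simp only [sub_zero, inv_one, map_one, map_zero, zero_mul, one_mul] at h
  refine h.congr fun m => ?_
  have hodd := recurrence_odd (psymSeries_recurrence hq)
    (fun _ => one_sub_mul_ne_zero _ (by simp)) m
  have hunit : (C (1 - q ^ (2 * m + 1))⁻¹ * (1 - C q ^ (2 * m + 1)) : ℝ⟦X⟧) = 1 := by
    rw [← map_pow, ← map_one C, ← map_sub, ← map_mul,
      inv_mul_cancel₀ (one_sub_pow_succ_ne_zero hq1 _)]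
  rw [map_pow, mul_assoc, hodd, ← mul_assoc, hunit, one_mul]

theorem tendsto_of_tendsto_even_odd {α : Type*} {f : ℕ → α} {l : Filter α}
    (heven : Tendsto (fun m => f (2 * m)) atTop l)
    (hodd : Tendsto (fun m => f (2 * m + 1)) atTop l) : Tendsto f atTop l := by
  intro s hs
  obtain ⟨N, hN⟩ := mem_atTop_sets.1 (inter_mem (heven hs) (hodd hs))
  refine mem_atTop_sets.2 ⟨2 * N, fun n hn => ?_⟩
  obtain ⟨m, rfl | rfl⟩ := n.even_or_odd'
  · exact (hN m (by lia)).1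
  · exact (hN m (by lia)).2

theorem tendsto_psymSeries (hq : q = 1 / p) (hq1 : |q| < 1) :
    Tendsto (psymSeries p) atTop
      (𝓝 (C (PiProdInf q / ((1 - q) * PiProdInf (q ^ 2))) *
        (substMulXSq (q ^ 3) (eulerSeries (q ^ 2)) * psymSeries p 1))) :=
  have hodd := tendsto_psymSeries_odd hq hq1
  tendsto_of_tendsto_even_odd (tendsto_psymSeries_even hq hq1 hodd) hodd

theorem coeff_substMulXSq_eulerSeries_mul (hq : q = 1 / p) (d : ℕ) :
    coeff d (substMulXSq (q ^ 3) (eulerSeries (q ^ 2)) * psymSeries p 1) =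
      ∑ j ∈ range (d / 2 + 1), (q ^ (3 * j) - q ^ (d + 1 + j)) / PiProd j (q ^ 2) := by
  rw [coeff_substMulXSq_mul]
  refine sum_congr rfl fun j hj => ?_
  have hexp : 3 * j + (d - 2 * j + 1) = d + 1 + j := by
    rw [mem_range] at hj
    lia
  rw [eulerSeries, psymSeries, coeff_mk, coeff_mk, Psym_one_primePow hq, ← hexp, pow_add, pow_mul]
  ring

end Limit

theorem Psym_tendsto (p : ℕ) (hp : p.Prime) (q : ℝ) (hq : q = 1 / p)
    (μ : ℕ) (hμ : 1 ≤ μ) (s : ℕ) (hs : s = (μ - 1) / 2) :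
    Filter.Tendsto (fun n : ℕ => Psym n (p ^ μ)) Filter.atTop
      (nhds ((PiProdInf q / ((1 - q) * PiProdInf (q ^ 2))) *
        ∑ j ∈ Finset.range (s + 1), (q ^ (3 * j) - q ^ (μ + j)) / PiProd j (q ^ 2))) := by
  have := Fact.mk hp
  have hq1 : |q| < 1 := by
    rw [hq, abs_of_nonneg (by positivity), one_div]
    exact inv_lt_one_of_one_lt₀ (mod_cast hp.one_lt)
  obtain ⟨d, rfl⟩ := Nat.exists_eq_add_of_le' hμ
  rw [Nat.add_sub_cancel] at hs
  have hlim := (PowerSeries.WithPiTopology.tendsto_iff_coeff_tendsto ..).1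
    (tendsto_psymSeries hq hq1) d
  rw [PowerSeries.coeff_C_mul, coeff_substMulXSq_eulerSeries_mul hq, ← hs] at hlim
  simpa only [psymSeries, PowerSeries.coeff_mk] using hlim
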